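/- Let n ∈ ℕ with 1 ≤ n < 2^{r+1} for some r ∈ ℕ, and let m = n + 36 · 2^{r+1}. If n! cannot be written as a sum of three squares of integers, then m! cannot be written as a sum of three squares of integers. -/

import Mathlib

/-!
By Legendre's theorem, a positive integer fails to be a sum of three squares exactly when it has the
form `4 ^ a * (8 * b + 7)`. This depends only on the parity of the `2`-adic valuation and on the
class modulo `8` of the odd part, and `factorial_class` shows that `n !` and `m !` agree in both: the
odd factors occurring at each halving step have a product modulo `8` that depends only on the
argument modulo `8`, and `36 !` has even valuation and odd part `≡ 1` modulo `8`.

Both halves of Legendre's theorem are needed, the hard one (`three_sq`) for `n !`. It follows the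
classical route through ternary forms. A positive definite integral ternary form of determinant `1`
is equivalent to `x² + y² + z²` by Hermite reduction (`reduce`). Hence `n` is a sum of three squares
as soon as `-d` is a square modulo `d n - 1` for some `d > 0` (`of_dvd`), as such a square root gives
a form of that kind representing `n`. Dirichlet's theorem on primes in arithmetic progressions
provides a `d` for which `d n - 1` is a prime or twice a prime, and quadratic reciprocity shows that
`-d` is a square modulo it.
-/

/-! ### Reduction of ternary forms -/

/-- An integer `u` can be moved into the interval `[-v / 2, v / 2]` by a multiple of `v`. -/
theorem exists_center (u v : ℤ) (hv : 0 < v) : ∃ t : ℤ, 4 * (u + t * v) ^ 2 ≤ v ^ 2 := by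
  refine ⟨-((2 * u + v) / (2 * v)), ?_⟩
  have h1 := Int.emod_add_mul_ediv (2 * u + v) (2 * v)
  have h2 := Int.emod_nonneg (2 * u + v) (b := 2 * v) (by omega)
  have h3 := Int.emod_lt_of_pos (2 * u + v) (b := 2 * v) (by omega)
  generalize (2 * u + v) / (2 * v) = q at *
  generalize (2 * u + v) % (2 * v) = s at *
  have : 2 * (u + -q * v) = s - v := by linarith
  have : 4 * (u + -q * v) ^ 2 = (s - v) ^ 2 := by rw [← this]; ring
  nlinarith

/-- The numerical end of Hermite's bound: a reduced form has `a ^ 3 ≤ 64 / 27`. -/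
theorem eq_one_of_bounds {a B : ℤ} (ha : 0 < a) (h34 : 3 * a ^ 2 ≤ 4 * B) (hB3 : 3 * B ^ 2 ≤ 4 * a) :
    a = 1 := by
  by_contra hne
  have h2 : 2 ≤ a := by omega
  have h5 : (3 * a ^ 2) ^ 2 ≤ (4 * B) ^ 2 := pow_le_pow_left₀ (by positivity) h34 2
  have h6 : 2 ^ 3 ≤ a ^ 3 := pow_le_pow_left₀ (by norm_num) h2 3
  have h7 : 0 ≤ a * (a ^ 3 - 2 ^ 3) := mul_nonneg ha.le (by linarith)
  linarith [show a * (a ^ 3 - 2 ^ 3) = a ^ 4 - 8 * a by ring,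
    show (3 * a ^ 2) ^ 2 = 9 * a ^ 4 by ring, show (4 * B) ^ 2 = 16 * B ^ 2 by ring]

/-- Hermite reduction. The form
`a x² + b y² + c z² + 2 h x y + 2 g x z + 2 k y z` is positive definite of determinant `1`, so it is
equivalent over `ℤ` to `x² + y² + z²`, and every `n` it represents is a sum of three squares.
The recursion is lexicographic, on `a` and then on the second leading minor `a b - h²`; `M` and `N`
carry these two quantities as natural numbers.

The binary form entering the reduction is the projection of the lattice along the first basis
vector, scaled by `a`: it has coefficients `a b - h²`, `a k - h g`, `a c - g²` and determinant
`a`. -/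
theorem reduce (n : ℤ) : ∀ (M N : ℕ) (a b c h g k : ℤ), a.toNat = M → (a * b - h ^ 2).toNat = N →
    0 < a → 0 < a * b - h ^ 2 →
    a * b * c + 2 * h * g * k - a * k ^ 2 - b * g ^ 2 - c * h ^ 2 = 1 →
    (∃ x y z : ℤ, n = a * x ^ 2 + b * y ^ 2 + c * z ^ 2 + 2 * h * x * y + 2 * g * x * z
      + 2 * k * y * z) →
    ∃ x y z : ℤ, n = x ^ 2 + y ^ 2 + z ^ 2 := by
  intro M
  induction M using Nat.strong_induction_on with
  | _ M ihM =>
  intro N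
  induction N using Nat.strong_induction_on with
  | _ N ihN =>
  intro a b c h g k hM hN ha hB hdet ⟨x, y, z, hn⟩
  obtain ⟨t, ht⟩ := exists_center (a * k - h * g) (a * b - h ^ 2) hB
  -- Replacing the third basis vector `e₃` by `e₃ + t e₂` makes the projected form nearly diagonal.
  obtain ⟨c', g', k', hc, hg, hk⟩ : ∃ c' g' k' : ℤ, c' = c + 2 * t * k + t ^ 2 * b ∧
    g' = g + t * h ∧ k' = k + t * b := ⟨_, _, _, rfl, rfl, rfl⟩
  have hdet' : a * b * c' + 2 * h * g' * k' - a * k' ^ 2 - b * g' ^ 2 - c' * h ^ 2 = 1 := by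
    rw [← hdet]; subst hc hg hk; ring
  have hB12 : 4 * (a * k' - h * g') ^ 2 ≤ (a * b - h ^ 2) ^ 2 := by
    refine le_trans (le_of_eq ?_) ht
    subst hg hk; ring
  have hn' : n = a * x ^ 2 + b * (y - t * z) ^ 2 + c' * z ^ 2 + 2 * h * x * (y - t * z)
      + 2 * g' * x * z + 2 * k' * (y - t * z) * z := by
    rw [hn]; subst hc hg hk; ring
  have hprod : (a * b - h ^ 2) * (a * c' - g' ^ 2) = a + (a * k' - h * g') ^ 2 := by
    linear_combination a * hdet'
  clear ht hn hdet hc hg hk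
  have hB22 : 0 < a * c' - g' ^ 2 := by
    refine pos_of_mul_pos_right (b := a * c' - g' ^ 2) (a := a * b - h ^ 2) ?_ hB.le
    rw [hprod]
    positivity
  -- If the projected form is not ordered, exchanging `e₂` and `e₃` lowers the second minor.
  rcases lt_or_ge (a * c' - g' ^ 2) (a * b - h ^ 2) with hlt | hge
  · refine ihN (a * c' - g' ^ 2).toNat (by omega) a c' b g' h k' hM rfl ha hB22
      (by linarith) ⟨x, z, y - t * z, ?_⟩
    rw [hn']; ring
  have hB3 : 3 * (a * b - h ^ 2) ^ 2 ≤ 4 * a := by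
    have := mul_le_mul_of_nonneg_left hge hB.le
    rw [hprod] at this
    linarith [sq (a * b - h ^ 2)]
  -- Next `e₂` is replaced by `e₂ + s e₁`; this leaves the second minor unchanged.
  obtain ⟨s, hs⟩ := exists_center h a ha
  obtain ⟨b', h', k'', hb, hh, hk⟩ : ∃ b' h' k'' : ℤ, b' = b + 2 * s * h + s ^ 2 * a ∧
    h' = h + s * a ∧ k'' = k' + s * g' := ⟨_, _, _, rfl, rfl, rfl⟩
  rw [← hh] at hs
  have hBB : a * b' - h' ^ 2 = a * b - h ^ 2 := by subst hb hh; ring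
  rw [← hBB] at hB hB3
  have hdet2 : a * b' * c' + 2 * h' * g' * k'' - a * k'' ^ 2 - b' * g' ^ 2 - c' * h' ^ 2 = 1 := by
    rw [← hdet']; subst hb hh hk; ring
  have hn2 : ∃ x y z : ℤ, n = a * x ^ 2 + b' * y ^ 2 + c' * z ^ 2 + 2 * h' * x * y
      + 2 * g' * x * z + 2 * k'' * y * z := by
    refine ⟨x - s * (y - t * z), y - t * z, z, ?_⟩
    rw [hn']; subst hb hh hk; ring
  have hb'pos : 0 < b' :=
    pos_of_mul_pos_right (show 0 < a * b' by linarith [sq_nonneg h']) ha.le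
  -- If `b' < a`, exchanging `e₁` and `e₂` lowers the first coefficient.
  rcases lt_or_ge b' a with hlt | hge'
  · obtain ⟨x, y, z, hn2⟩ := hn2
    refine ihM b'.toNat (by omega) _ b' a c' h' k'' g' rfl rfl hb'pos (by linarith) (by linarith)
      ⟨y, x, z, ?_⟩
    rw [hn2]; ring
  have h34 : 3 * a ^ 2 ≤ 4 * (a * b' - h' ^ 2) := by
    linarith [mul_le_mul_of_nonneg_left hge' ha.le, sq a]
  have ha1 : a = 1 := eq_one_of_bounds ha h34 hB3
  subst ha1
  have hh0 : h' = 0 := by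
    have := sq_nonneg h'
    exact pow_eq_zero_iff two_ne_zero |>.1 (by omega)
  subst hh0
  have hb1 : b' = 1 := by
    have h1 : 3 * b' ^ 2 ≤ 4 := by linarith [show (1 * b' - 0 ^ 2) ^ 2 = b' ^ 2 by ring]
    have h2 : b' < 2 := lt_of_pow_lt_pow_left₀ 2 (by norm_num) (by linarith)
    omega
  subst hb1
  obtain ⟨x, y, z, hn2⟩ := hn2
  -- With `a = b' = 1` and `h' = 0`, completing the squares leaves `z²` with coefficient `1`.
  have hc1 : c' = 1 + k'' ^ 2 + g' ^ 2 := by linarith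
  refine ⟨x + g' * z, y + k'' * z, z, ?_⟩
  rw [hn2, hc1]; ring

/-- If `-d` is a square modulo `d n - 1`, say `x² + d = b (d n - 1)`, then `n` is a sum of three
squares: it is the last diagonal coefficient of the symmetric matrix with rows
`(d n - 1, x, 0)`, `(x, b, 1)`, `(0, 1, n)`, whose leading minors are `d n - 1`, `d`, `1`. -/
theorem of_dvd (n d : ℕ) (x : ℤ) (hd : 0 < d)
    (hpos : 1 < d * n) (hx : ((d * n : ℕ) - 1 : ℤ) ∣ x ^ 2 + d) :
    ∃ a b c : ℤ, (n : ℤ) = a ^ 2 + b ^ 2 + c ^ 2 := by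
  obtain ⟨b, hb⟩ := hx
  push_cast at hb
  have hp : (1:ℤ) < d * n := by exact_mod_cast hpos
  have hd' : (0:ℤ) < d := by exact_mod_cast hd
  refine reduce n _ _ (d * n - 1) b n x 0 1 rfl rfl (by linarith) (by linarith) ?_ ⟨0, 0, 1, by ring⟩
  linear_combination -n * hb

/-! ### Quadratic residues and Legendre's theorem -/

open scoped NumberTheorySymbols

theorem exists_dvd {p d : ℕ} (hp : p.Prime) (h : J(-d | p) = 1) : ∃ x : ℤ, (p : ℤ) ∣ x ^ 2 + d := by
  have := Fact.mk hp
  rw [← jacobiSym.legendreSym.to_jacobiSym] at h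
  have h0 : ((-d : ℤ) : ZMod p) ≠ 0 := by
    intro h0
    rw [(legendreSym.eq_zero_iff p _).2 h0] at h
    exact absurd h (by norm_num)
  obtain ⟨y, hy⟩ := (legendreSym.eq_one_iff p h0).1 h
  obtain ⟨x, rfl⟩ := ZMod.intCast_surjective y
  refine ⟨x, (ZMod.intCast_zmod_eq_zero_iff_dvd _ _).1 ?_⟩
  push_cast at hy ⊢
  linear_combination -hy

/-- By reciprocity, `(-d / p) = (p / d) = (-1 / d) = 1`. -/
theorem jac1 {p d : ℕ} (hp : p % 4 = 1) (hd : d % 4 = 1) (hdvd : d ∣ p + 1) : J(-d | p) = 1 := by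
  have hpo : Odd p := Nat.odd_iff.2 (by omega)
  have hdo : Odd d := Nat.odd_iff.2 (by omega)
  have hmod : J(p | d) = J(-1 | d) :=
    by
    refine jacobiSym.mod_left' (Int.modEq_iff_dvd.2 ?_)
    have : (d : ℤ) ∣ ((p + 1 : ℕ) : ℤ) := by exact_mod_cast hdvd
    push_cast at this
    rwa [← dvd_neg, show -(-1 - (p : ℤ)) = p + 1 by ring]
  rw [neg_eq_neg_one_mul, jacobiSym.mul_left, jacobiSym.at_neg_one hpo,
    ZMod.χ₄_nat_one_mod_four hp, jacobiSym.quadratic_reciprocity_one_mod_four hd hpo,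
    hmod, jacobiSym.at_neg_one hdo, ZMod.χ₄_nat_one_mod_four hd, one_mul]

/-- By reciprocity, `(-d / p) = (p / d)`, and `(p / d) = (-2 / d) (p / d) = (-2 p / d) = 1` since
`(-2 / d) = 1` for `d ≡ 1, 3` modulo `8`. -/
theorem jac2 {p d : ℕ} (hd : d % 8 = 1 ∨ d % 8 = 3) (hp : p % 4 = 1 ∨ p % 4 = 3 ∧ d % 8 = 3)
    (hdvd : d ∣ 2 * p + 1) : J(-d | p) = 1 := by
  have hpo : Odd p := Nat.odd_iff.2 (by omega)
  have hdo : Odd d := Nat.odd_iff.2 (by omega)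
  have hone : J(-2 * p | d) = J(1 | d) := by
    refine jacobiSym.mod_left' (Int.modEq_iff_dvd.2 ?_)
    have : (d : ℤ) ∣ ((2 * p + 1 : ℕ) : ℤ) := by exact_mod_cast hdvd
    push_cast at this
    convert this using 1; ring
  have htwo : J(-2 | d) = 1 := by
    rw [jacobiSym.at_neg_two hdo, ZMod.χ₈'_nat_eq_if_mod_eight]
    rcases hd with hd | hd <;> simp [hd] <;> omega
  rw [jacobiSym.mul_left, htwo, one_mul, jacobiSym.one_left] at hone
  rw [neg_eq_neg_one_mul, jacobiSym.mul_left, jacobiSym.at_neg_one hpo]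
  rcases hp with hp | ⟨hp, hd⟩
  · rw [ZMod.χ₄_nat_one_mod_four hp, jacobiSym.quadratic_reciprocity_one_mod_four' hdo hp, hone,
      one_mul]
  · rw [ZMod.χ₄_nat_three_mod_four hp,
      jacobiSym.quadratic_reciprocity_three_mod_four (by omega) hp, hone]
    norm_num

/-- Dirichlet's theorem gives a prime `p = (4 j + 1) n - 1`, which is `1` modulo `4`, so `of_dvd`
applies with `d = 4 j + 1`. -/
theorem three_sq_two_mod_four {n : ℕ} (hn : n % 4 = 2) :
    ∃ a b c : ℤ, (n : ℤ) = a ^ 2 + b ^ 2 + c ^ 2 := by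
  obtain ⟨q, rfl⟩ : ∃ q, n = q + 1 := ⟨n - 1, by omega⟩
  have hcop : q.Coprime (4 * (q + 1)) := by
    refine Nat.Coprime.mul_right ?_ (by simp)
    exact Nat.Coprime.pow_right 2 (Nat.coprime_two_right.2 (Nat.odd_iff.2 (by omega)))
  obtain ⟨p, hpq, hp, hmod⟩ := Nat.forall_exists_prime_gt_and_modEq q (by omega) hcop
  obtain ⟨j, hj⟩ := (Nat.modEq_iff_dvd' hpq.le).1 hmod.symm
  have hpj : p + 1 = (4 * j + 1) * (q + 1) := by
    have : p = 4 * (q + 1) * j + q := by omega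
    rw [this]; ring
  have hp4 : p % 4 = 1 := by
    have : p = 4 * ((q + 1) * j) + q := by rw [← mul_assoc]; omega
    omega
  obtain ⟨x, hx⟩ := exists_dvd hp (jac1 hp4 (d := 4 * j + 1) (by omega) ⟨_, hpj⟩)
  refine of_dvd (q + 1) (4 * j + 1) x (by omega) (by rw [← hpj]; have := hp.pos; omega) ?_
  rw [← hpj]
  simpa using hx

/-- The case of odd `n`, with `c = 1` for `n ≡ 3` and `c = 3` for `n ≡ 1, 5` modulo `8`.
Dirichlet's theorem gives a prime `p = q + 4 n j`, so that `2 p = (8 j + c) n - 1`, and `of_dvd`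
applies with `d = 8 j + c`. -/
theorem three_sq_odd {n c q : ℕ} (hcn : c * n = 2 * q + 1) (hc : c = 1 ∨ c = 3)
    (hq : q % 4 = 1 ∨ q % 4 = 3 ∧ c = 3) :
    ∃ a b c : ℤ, (n : ℤ) = a ^ 2 + b ^ 2 + c ^ 2 := by
  have hn : n ≠ 0 := by rintro rfl; omega
  have hcop : q.Coprime (4 * n) := by
    refine Nat.Coprime.mul_right ?_ ?_
    · exact Nat.Coprime.pow_right 2 (Nat.coprime_two_right.2 (Nat.odd_iff.2 (by omega)))
    · refine Nat.Coprime.coprime_dvd_right (Dvd.intro_left c hcn) (by simp)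
  obtain ⟨p, hpq, hp, hmod⟩ := Nat.forall_exists_prime_gt_and_modEq q (by omega) hcop
  obtain ⟨j, hj⟩ := (Nat.modEq_iff_dvd' hpq.le).1 hmod.symm
  have hpj : 2 * p + 1 = (8 * j + c) * n := by
    have : p = 4 * n * j + q := by omega
    rw [this, add_mul, hcn]; ring
  have hp4 : p % 4 = q % 4 := by
    have : p = 4 * (n * j) + q := by rw [← mul_assoc]; omega
    omega
  obtain ⟨x, hx⟩ := exists_dvd hp (jac2 (d := 8 * j + c) (by omega) (by omega) ⟨_, hpj⟩)
  -- An odd root modulo `p` is also a root modulo `2 p`, because `8 * j + c` is odd.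
  obtain ⟨y, hy, hyo⟩ : ∃ y : ℤ, (p : ℤ) ∣ y ^ 2 + (8 * j + c : ℕ) ∧ y % 2 = 1 := by
    rcases Int.emod_two_eq_zero_or_one x with h0 | h1
    · refine ⟨x + p, ?_, by omega⟩
      rw [show (x + p) ^ 2 + (8 * j + c : ℕ) = x ^ 2 + (8 * j + c : ℕ) + p * (2 * x + p) by ring]
      exact hx.add (dvd_mul_right _ _)
    · exact ⟨x, hx, h1⟩
  refine of_dvd n (8 * j + c) y (by omega) (by rw [← hpj]; have := hp.pos; omega) ?_
  rw [← hpj]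
  have h2 : (2 : ℤ) ∣ y ^ 2 + (8 * j + c : ℕ) := by
    have : y ^ 2 % 2 = 1 := by simp [pow_two, Int.mul_emod, hyo]
    push_cast
    omega
  have hcop2 : IsCoprime (2 : ℤ) p := by
    have : Nat.Coprime 2 p := Nat.coprime_two_left.2 (Nat.odd_iff.2 (by omega))
    exact_mod_cast Nat.isCoprime_iff_coprime.2 this
  simpa using hcop2.mul_dvd h2 hy

/-- The hard half of Legendre's three-square theorem. -/
theorem three_sq (n : ℕ) (hn : 0 < n) :
    (∃ a b c : ℤ, (n : ℤ) = a ^ 2 + b ^ 2 + c ^ 2) ∨ ∃ a b : ℕ, n = 4 ^ a * (8 * b + 7) := by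
  induction n using Nat.strong_induction_on with
  | _ n ih =>
  have hcases : n % 4 = 0 ∨ n % 4 = 2 ∨ n % 8 = 1 ∨ n % 8 = 3 ∨ n % 8 = 5 ∨ n % 8 = 7 := by omega
  rcases hcases with h | h | h | h | h | h
  · obtain ⟨k, rfl⟩ := Nat.dvd_of_mod_eq_zero h
    rcases ih k (by omega) (by omega) with ⟨a, b, c, hk⟩ | ⟨a, b, rfl⟩
    · left
      refine ⟨2 * a, 2 * b, 2 * c, ?_⟩
      push_cast
      rw [hk]; ring
    · exact .inr ⟨a + 1, b, by ring⟩
  · exact .inl (three_sq_two_mod_four h)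
  · exact .inl (three_sq_odd (c := 3) (q := (3 * n - 1) / 2) (by omega) (by omega) (by omega))
  · exact .inl (three_sq_odd (c := 1) (q := (n - 1) / 2) (by omega) (by omega) (by omega))
  · exact .inl (three_sq_odd (c := 3) (q := (3 * n - 1) / 2) (by omega) (by omega) (by omega))
  · exact .inr ⟨0, n / 8, by omega⟩

/-- The easy half of Legendre's three-square theorem, by congruences modulo `8` and descent
modulo `4`. -/
theorem not_three_sq (g : ℕ) {v : ℕ} (hv : v % 8 = 7) (a b c : ℤ) :
    ((4 ^ g * v : ℕ) : ℤ) ≠ a ^ 2 + b ^ 2 + c ^ 2 := by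
  have sq : ∀ t : ℤ, t % 2 = 0 ∧ t ^ 2 % 4 = 0 ∧ (t ^ 2 % 8 = 0 ∨ t ^ 2 % 8 = 4) ∨
      t ^ 2 % 4 = 1 ∧ t ^ 2 % 8 = 1 := by
    intro t
    have : t % 8 = 0 ∨ t % 8 = 1 ∨ t % 8 = 2 ∨ t % 8 = 3 ∨ t % 8 = 4 ∨ t % 8 = 5 ∨ t % 8 = 6 ∨
      t % 8 = 7 := by omega
    have h8 : t ^ 2 % 8 = (t % 8) * (t % 8) % 8 := by rw [pow_two, Int.mul_emod]
    rcases this with h | h | h | h | h | h | h | h <;> rw [h] at h8 <;> norm_num at h8 <;> omega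
  induction g generalizing a b c with
  | zero =>
    intro h
    simp only [pow_zero, one_mul] at h
    have := sq a; have := sq b; have := sq c
    omega
  | succ g ih =>
    intro h
    have h4 : ((4 ^ (g + 1) * v : ℕ) : ℤ) = 4 * ((4 ^ g * v : ℕ) : ℤ) := by push_cast; ring
    rw [h4] at h
    have ha := sq a; have hb := sq b; have hc := sq c
    obtain ⟨a, rfl⟩ : (2 : ℤ) ∣ a := by omega
    obtain ⟨b, rfl⟩ : (2 : ℤ) ∣ b := by omega
    obtain ⟨c, rfl⟩ : (2 : ℤ) ∣ c := by omega
    exact ih a b c (by linarith)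

/-! ### Odd parts of factorials -/

open scoped Nat

/-- The product `1 * 3 * 5 * ⋯ * (2 * k - 1)` of the first `k` odd numbers. -/
def oddProd (k : ℕ) : ℕ := ∏ i ∈ Finset.range k, (2 * i + 1)

theorem oddProd_succ (k : ℕ) : oddProd (k + 1) = oddProd k * (2 * k + 1) :=
  Finset.prod_range_succ _ _

theorem oddProd_odd (k : ℕ) : oddProd k % 2 = 1 := by
  induction k with
  | zero => rfl
  | succ k ih => rw [oddProd_succ, Nat.mul_mod, ih]; omega

/-- Four consecutive odd numbers have product `1 * 3 * 5 * 7 ≡ 1` modulo `8`. -/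
theorem oddProd_period (k j : ℕ) : oddProd (k + 4 * j) ≡ oddProd k [MOD 8] := by
  induction j with
  | zero => rfl
  | succ j ih =>
    refine Nat.ModEq.trans ?_ ih
    generalize hl : k + 4 * j = l
    have h1 : (2 * l + 1) * (2 * l + 3) * (2 * l + 5) * (2 * l + 7) ≡ 1 [MOD 8] := by
      have h8 : l ≡ l % 8 [MOD 8] := (Nat.mod_modEq l 8).symm
      refine Nat.ModEq.trans (b := (2 * (l % 8) + 1) * (2 * (l % 8) + 3) * (2 * (l % 8) + 5) *
        (2 * (l % 8) + 7)) (by gcongr) ?_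
      have hlt : l % 8 < 8 := Nat.mod_lt _ (by norm_num)
      generalize l % 8 = s at hlt
      interval_cases s <;> rfl
    have h2 := h1.mul_left (oddProd l)
    rw [mul_one] at h2
    convert h2 using 1
    rw [show k + 4 * (j + 1) = k + 4 * j + 1 + 1 + 1 + 1 by ring]
    simp only [oddProd_succ, hl]
    ring

/-- Separation of the even and the odd factors of `n !`. -/
theorem factorial_eq (n : ℕ) : n ! = 2 ^ (n / 2) * (n / 2)! * oddProd ((n + 1) / 2) := by
  have even : ∀ k, (2 * k)! = 2 ^ k * k ! * oddProd k := by
    intro k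
    induction k with
    | zero => rfl
    | succ k ih =>
      rw [show 2 * (k + 1) = 2 * k + 1 + 1 by ring, Nat.factorial_succ, Nat.factorial_succ, ih,
        Nat.factorial_succ, oddProd_succ]
      ring
  rcases Nat.even_or_odd' n with ⟨k, rfl | rfl⟩
  · rw [show 2 * k / 2 = k by omega, show (2 * k + 1) / 2 = k by omega, even]
  · rw [show (2 * k + 1) / 2 = k by omega, show (2 * k + 1 + 1) / 2 = k + 1 by omega,
      Nat.factorial_succ, even, oddProd_succ]
    ring

/-- Prefixing the binary digits of `n` by `100100` changes neither the parity of the `2`-adic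
valuation of `n !` nor the class modulo `8` of its odd part. Halving `n` removes the last digit and,
by `factorial_eq`, contributes a power of `2` and a product of odd numbers that the prefix does not
affect; this reduces the claim to `0 ! = 1` and `36 ! = 2 ^ 34 * v` with `v ≡ 1` modulo `8`. -/
theorem factorial_class (k n : ℕ) (hn : n < 2 ^ k) : ∃ e f u v : ℕ,
    n ! = 2 ^ e * u ∧ (n + 36 * 2 ^ k)! = 2 ^ f * v ∧ e % 2 = f % 2 ∧ u % 2 = 1 ∧
      u ≡ v [MOD 8] := by
  induction k generalizing n with
  | zero =>
    obtain rfl : n = 0 := by omega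
    exact ⟨0, 34, 1, 36 ! / 2 ^ 34, by decide, by decide +kernel, rfl, rfl, by decide +kernel⟩
  | succ k ih =>
    obtain ⟨e, f, u, v, hu, hv, hef, huo, huv⟩ := ih (n / 2) (by rw [pow_succ] at hn; omega)
    have hdiv : (n + 36 * 2 ^ (k + 1)) / 2 = n / 2 + 36 * 2 ^ k := by rw [pow_succ]; omega
    have hdiv' : (n + 36 * 2 ^ (k + 1) + 1) / 2 = (n + 1) / 2 + 4 * (9 * 2 ^ k) := by
      rw [pow_succ]; omega
    refine ⟨n / 2 + e, n / 2 + 36 * 2 ^ k + f, u * oddProd ((n + 1) / 2),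
      v * oddProd ((n + 1) / 2 + 4 * (9 * 2 ^ k)), ?_, ?_, by omega, ?_, ?_⟩
    · rw [factorial_eq, hu]; ring
    · rw [factorial_eq, hdiv, hdiv', hv]; ring
    · rw [Nat.mul_mod, huo, oddProd_odd]
    · exact huv.mul (oddProd_period _ _).symm

theorem two_pow_mul_inj {x y s t : ℕ} (hs : s % 2 = 1) (ht : t % 2 = 1)
    (h : 2 ^ x * s = 2 ^ y * t) : x = y ∧ s = t := by
  induction x generalizing y with
  | zero =>
    cases y with
    | zero => simpa using h
    | succ y => rw [pow_succ, pow_zero, one_mul, mul_right_comm] at h; omega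
  | succ x ih =>
    cases y with
    | zero => rw [pow_succ, pow_zero, one_mul, mul_right_comm] at h; omega
    | succ y =>
      have := ih (y := y) (by rw [pow_succ, pow_succ, mul_right_comm, mul_right_comm _ 2] at h; omega)
      omega

open Nat in
theorem stmt_14 (n r : ℕ) (hn : 1 ≤ n) (hnr : n < 2 ^ (r + 1))
    (m : ℕ) (hm : m = n + 36 * 2 ^ (r + 1))
    (h : ¬ ∃ a b c : ℤ, (n ! : ℤ) = a ^ 2 + b ^ 2 + c ^ 2) :
    ¬ ∃ a b c : ℤ, (m ! : ℤ) = a ^ 2 + b ^ 2 + c ^ 2 := by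
  obtain ⟨a, b, hab⟩ := (three_sq _ n.factorial_pos).resolve_left h
  obtain ⟨e, f, u, v, hu, hv, hef, huo, huv⟩ := factorial_class (r + 1) n hnr
  rw [hu, show 4 ^ a = 2 ^ (2 * a) by rw [pow_mul]; rfl] at hab
  obtain ⟨rfl, rfl⟩ := two_pow_mul_inj huo (by omega) hab
  obtain ⟨g, rfl⟩ : ∃ g, f = 2 * g := ⟨f / 2, by omega⟩
  rintro ⟨x, y, z, hxyz⟩
  rw [hm, hv, pow_mul] at hxyz
  exact not_three_sq g (by have : _ % 8 = _ % 8 := huv; omega) x y z hxyz
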